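/- Suppose u ∈ C²(S² \ {S, N}) is a (−1)-homogeneous axisymmetric solution of the stationary Navier–Stokes equations satisfying limsup_{x∈S², |x'|→0} |u(x)|/|ln|x'|| < ∞. Then u_φ ≡ 0 (u has no swirl), and the two limits lim_{x∈S², x→S} |u(x)|/ln|x'| and lim_{x∈S², x→N} |u(x)|/ln|x'| exist, are finite, are equal to each other, and are nonpositive. -/

import Mathlib

noncomputable section

open Real Filter MeasureTheory Metric Topology
open scoped ENNReal InnerProductSpace

abbrev V3 := EuclideanSpace ℝ (Fin 3)
abbrev V2 := EuclideanSpace ℝ (Fin 2)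

/-- standard basis vector in `ℝ³` -/
def e3 (j : Fin 3) : V3 := EuclideanSpace.single j 1

/-- partial derivative `∂_j f` -/
def pd (j : Fin 3) (f : V3 → ℝ) (x : V3) : ℝ := fderiv ℝ f x (e3 j)

/-- Laplacian on `ℝ³` -/
def lap3 (f : V3 → ℝ) (x : V3) : ℝ := ∑ j, pd j (fun y => pd j f y) x

/-- stationary Navier–Stokes equations `-Δu + (u·∇)u + ∇p = 0`, `div u = 0` at `x` -/
def NSEq (u : V3 → V3) (p : V3 → ℝ) (x : V3) : Prop :=
  (∀ i, - lap3 (fun z => u z i) x + (∑ j, u x j * pd j (fun z => u z i) x) + pd i p x = 0)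
  ∧ (∑ j, pd j (fun z => u z j) x) = 0

/-- stationary Euler equations `(u·∇)u + ∇p = 0`, `div u = 0` at `x` -/
def EulerEq (u : V3 → V3) (p : V3 → ℝ) (x : V3) : Prop :=
  (∀ i, (∑ j, u x j * pd j (fun z => u z i) x) + pd i p x = 0)
  ∧ (∑ j, pd j (fun z => u z j) x) = 0

/-- south pole -/
def S3 : V3 := EuclideanSpace.single 2 (-1)
/-- north pole -/
def N3 : V3 := EuclideanSpace.single 2 1

/-- the unit sphere `S²` -/
def sphere2 : Set V3 := Metric.sphere (0 : V3) 1

/-- the open cone over a subset of the unit sphere -/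
def cone3 (Ω : Set V3) : Set V3 := {x : V3 | x ≠ 0 ∧ (‖x‖⁻¹ • x) ∈ Ω}

/-- `|x'| = √(x₁² + x₂²)` -/
def rho (x : V3) : ℝ := Real.sqrt ((x 0) ^ 2 + (x 1) ^ 2)

/-- the `x₃`-axis `{x' = 0}` -/
def axis3 : Set V3 := {x : V3 | x 0 = 0 ∧ x 1 = 0}

/-- `Ω_{a,b,R} = {a < x₃ < b, |x'| < R}` -/
def OmegaR (a b R : ℝ) : Set V3 := {x : V3 | a < x 2 ∧ x 2 < b ∧ rho x < R}

/-- build a point of `ℝ³` from `x' ∈ ℝ²` and `x₃ ∈ ℝ` -/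
def emb (y : V2) (t : ℝ) : V3 := (EuclideanSpace.equiv (Fin 3) ℝ).symm ![y 0, y 1, t]

/-- spherical component `u_r = u · e_r` -/
def uRc (u : V3 → V3) (x : V3) : ℝ := (u x 0 * x 0 + u x 1 * x 1 + u x 2 * x 2) / ‖x‖

/-- spherical component `u_θ = u · e_θ` -/
def uTc (u : V3 → V3) (x : V3) : ℝ :=
  (u x 0 * x 0 * x 2 + u x 1 * x 1 * x 2) / (‖x‖ * rho x) - u x 2 * rho x / ‖x‖

/-- spherical component `u_φ = u · e_φ` -/
def uPc (u : V3 → V3) (x : V3) : ℝ := (-(u x 0) * x 1 + u x 1 * x 0) / rho x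

/-- axisymmetry on a set: the spherical components are independent of the meridian angle -/
def AxisymOn (u : V3 → V3) (Ω : Set V3) : Prop :=
  ∀ x ∈ Ω, ∀ y ∈ Ω, ‖x‖ = ‖y‖ → x 2 = y 2 →
    uRc u x = uRc u y ∧ uTc u x = uTc u y ∧ uPc u x = uPc u y

/-- spherical frame vector `e_r` -/
def eRv (x : V3) : V3 := ‖x‖⁻¹ • x

/-- spherical frame vector `e_θ` -/
def eThv (x : V3) : V3 := (EuclideanSpace.equiv (Fin 3) ℝ).symm
  ![x 2 * x 0 / (‖x‖ * rho x), x 2 * x 1 / (‖x‖ * rho x), -(rho x) / ‖x‖]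

/-- spherical frame vector `e_φ` -/
def ePhv (x : V3) : V3 := (EuclideanSpace.equiv (Fin 3) ℝ).symm ![-(x 1) / rho x, x 0 / rho x, 0]

/-- the spherical cap `S² ∩ B_δ(S) \ {S}` -/
def NSCap (δ : ℝ) : Set V3 := (sphere2 ∩ Metric.ball S3 δ) \ {S3}

/-- the spherical cap `S² ∩ B_δ(S)` -/
def NSCapFull (δ : ℝ) : Set V3 := sphere2 ∩ Metric.ball S3 δ


lemma const_of_hd {F F' : ℝ → ℝ} (h : ∀ z, HasDerivAt F (F' z) z) (h0 : ∀ z, F' z = 0) (x y : ℝ) :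
    F x = F y :=
  is_const_of_deriv_eq_zero (fun z => (h z).differentiableAt) (fun z => by rw [(h z).deriv, h0]) x y

lemma sig_pos (z : ℝ) : 0 < √(1 + z ^ 2) := Real.sqrt_pos.2 (by positivity)
lemma sig_sq (z : ℝ) : √(1 + z ^ 2) ^ 2 = 1 + z ^ 2 := Real.sq_sqrt (by positivity)

lemma hd_sig (z : ℝ) : HasDerivAt (fun z : ℝ => √(1 + z ^ 2)) (z / √(1 + z ^ 2)) z := by
  have h : HasDerivAt (fun z : ℝ => 1 + z ^ 2) (2 * z) z := by
    simpa using ((hasDerivAt_id z).pow 2).const_add 1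
  convert h.sqrt (by positivity) using 1
  have := sig_pos z
  field_simp

/-- integrated Riccati form -/
lemma ode_int (a a1 a2 c c1 c2 q q1 : ℝ → ℝ)
    (ha : ∀ z, HasDerivAt a (a1 z) z) (ha1 : ∀ z, HasDerivAt a1 (a2 z) z)
    (hc : ∀ z, HasDerivAt c (c1 z) z) (hc1 : ∀ z, HasDerivAt c1 (c2 z) z)
    (hq : ∀ z, HasDerivAt q (q1 z) z)
    (eq0 : ∀ z, -((2 * a z + 4 * z * a1 z + z ^ 2 * a2 z) + (-z * a1 z - 2 * a z) + a2 z)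
      + (a z * (-a z - z * a1 z) + c z * a1 z) + (-2 * q z - z * q1 z) = 0)
    (eq2 : ∀ z, -((2 * c z + 4 * z * c1 z + z ^ 2 * c2 z) + (-z * c1 z - c z) + c2 z)
      + (a z * (-c z - z * c1 z) + c z * c1 z) + q1 z = 0)
    (div : ∀ z, -z * a1 z + c1 z = 0) :
    ∃ k l d : ℝ, ∀ z, (a z + z * c z) - 2 * z * (c z - z * a z) + (c z - z * a z) ^ 2 / 2
      = (1 + z ^ 2) * (k * (z / √(1 + z ^ 2)) ^ 2 + l * (z / √(1 + z ^ 2)) + d) := by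
  have hid : ∀ z : ℝ, HasDerivAt (fun z : ℝ => z) 1 z := fun z => hasDerivAt_id z
  have hR : ∀ z : ℝ, HasDerivAt (fun z : ℝ => 1 + z ^ 2) (2 * z) z := fun z => by
    simpa using ((hasDerivAt_id z).pow 2).const_add 1
  have hc2 : ∀ z, c2 z = a1 z + z * a2 z := by
    intro z
    have h1 : HasDerivAt c1 (1 * a1 z + z * a2 z) z := by
      have : c1 = fun z => z * a1 z := by funext z; linarith [div z]
      rw [this]; exact (hid z).mul (ha1 z)
    have := (hc1 z).unique h1
    linarith
  have hc1' : ∀ z, c1 z = z * a1 z := fun z => by linarith [div z]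
  have hm : ∀ z, HasDerivAt (fun z => c z - z * a z) (-a z) z := fun z => by
    refine ((hc z).sub ((hid z).mul (ha z))).congr_deriv ?_
    rw [hc1']; ring
  have hf : ∀ z, HasDerivAt (fun z => a z + z * c z)
      ((1 + z ^ 2) * a1 z + c z) z := fun z => by
    refine ((ha z).add ((hid z).mul (hc z))).congr_deriv ?_
    rw [hc1']; ring
  -- step A
  have hA : ∀ z, HasDerivAt (fun z => (1 + z ^ 2) * q z - (a z + z * c z) + (c z - z * a z) ^ 2 / 2)
      (2 * z * q z + (1 + z ^ 2) * q1 z - ((1 + z ^ 2) * a1 z + c z)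
        + (c z - z * a z) * (- a z)) z := fun z => by
    refine ((((hR z).mul (hq z)).sub (hf z)).add (((hm z).pow 2).div_const 2)).congr_deriv ?_
    simp; ring
  have hA0 := const_of_hd hA (fun z => by
    have e0 := eq0 z
    have e2 := eq2 z
    rw [hc1', hc2] at e2
    linear_combination e2 - z * e0)
  set k0 := (1 + (0:ℝ) ^ 2) * q 0 - (a 0 + 0 * c 0) + (c 0 - 0 * a 0) ^ 2 / 2 with hk0
  have hA1 : ∀ z, (1 + z ^ 2) * q z - (a z + z * c z) + (c z - z * a z) ^ 2 / 2 = k0 :=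
    fun z => hA0 z 0
  -- step B
  let e : ℝ → ℝ := fun z => (1 + z ^ 2) * ((1 + z ^ 2) * a1 z + c z)
    - (c z - z * a z) * (a z + z * c z) - 2 * (c z - z * a z)
  have he : ∀ z, HasDerivAt e (2 * z * ((1 + z ^ 2) * a1 z + c z)
      + (1 + z ^ 2) * (2 * z * a1 z + (1 + z ^ 2) * a2 z + c1 z)
      - (-a z * (a z + z * c z) + (c z - z * a z) * ((1 + z ^ 2) * a1 z + c z)) - 2 * (-a z)) z := by
    intro z
    exact (((hR z).mul (((hR z).mul (ha1 z)).add (hc z))).sub ((hm z).mul (hf z))).sub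
      ((hm z).const_mul 2)
  have hB : ∀ z, HasDerivAt (fun z => e z / √(1 + z ^ 2) + 2 * k0 * (z / √(1 + z ^ 2))) 0 z := by
    intro z
    have hs := sig_pos z
    have hs2 := sig_sq z
    refine (((he z).div (hd_sig z) hs.ne').add
      (((hid z).div (hd_sig z) hs.ne').const_mul (2 * k0))).congr_deriv ?_
    set s := √(1 + z ^ 2)
    have key : (1 + z ^ 2) * (2 * z * ((1 + z ^ 2) * a1 z + c z)
      + (1 + z ^ 2) * (2 * z * a1 z + (1 + z ^ 2) * a2 z + c1 z)
      - (-a z * (a z + z * c z) + (c z - z * a z) * ((1 + z ^ 2) * a1 z + c z)) - 2 * (-a z))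
      - z * e z + 2 * k0 = 0 := by
      have e0 := eq0 z
      have e2 := eq2 z
      rw [hc1', hc2] at e2
      rw [hc1']
      simp only [e]
      linear_combination -(1 + z ^ 2) * (e0 + z * e2) - 2 * hA1 z
    rw [← hs2] at key
    field_simp
    rw [← hs2]
    linear_combination (exp := 1) key + 2 * k0 * hs2
  have hB0 := const_of_hd hB (fun _ => rfl)
  set l := e 0 / √(1 + 0 ^ 2) + 2 * k0 * (0 / √(1 + 0 ^ 2)) with hl
  have hB1 : ∀ z, e z + 2 * k0 * z - l * √(1 + z ^ 2) = 0 := by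
    intro z
    have := hB0 z 0
    rw [← hl] at this
    have hs := sig_pos z
    rw [← this]; field_simp; ring
  -- step C
  let Y : ℝ → ℝ := fun z => (a z + z * c z) - 2 * z * (c z - z * a z) + (c z - z * a z) ^ 2 / 2
  have hY : ∀ z, HasDerivAt Y (((1 + z ^ 2) * a1 z + c z) - (2 * (c z - z * a z) + 2 * z * (-a z))
      + (c z - z * a z) * (-a z)) z := by
    intro z
    refine (((hf z).sub (((hid z).const_mul 2).mul (hm z))).add
      (((hm z).pow 2).div_const 2)).congr_deriv ?_
    simp; ring
  have hC : ∀ z, HasDerivAt (fun z => Y z / (1 + z ^ 2) + k0 * (z / √(1 + z ^ 2)) ^ 2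
      - l * (z / √(1 + z ^ 2))) 0 z := by
    intro z
    have hs := sig_pos z
    have hs2 := sig_sq z
    have ht : HasDerivAt (fun z => z / √(1 + z ^ 2)) (1 / √(1 + z ^ 2) ^ 3) z := by
      refine ((hid z).div (hd_sig z) hs.ne').congr_deriv ?_
      field_simp
      rw [hs2]; ring
    refine ((((hY z).div (hR z) (by positivity)).add ((ht.pow 2).const_mul k0)).sub
      (ht.const_mul l)).congr_deriv ?_
    have h1 := hB1 z
    have key : (((1 + z ^ 2) * a1 z + c z) - (2 * (c z - z * a z) + 2 * z * (-a z))
      + (c z - z * a z) * (-a z)) * (1 + z ^ 2) - Y z * (2 * z) = l * √(1 + z ^ 2) - 2 * k0 * z := by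
      rw [← sub_eq_zero, ← hB1 z]
      simp only [Y, e]; ring
    rw [key]
    set s := √(1 + z ^ 2)
    rw [← hs2]
    simp
    field_simp
    ring
  have hC0 := const_of_hd hC (fun _ => rfl)
  refine ⟨-k0, l, Y 0 / (1 + 0 ^ 2) + k0 * (0 / √(1 + 0 ^ 2)) ^ 2 - l * (0 / √(1 + 0 ^ 2)), ?_⟩
  intro z
  have := hC0 z 0
  rw [← this]
  have hp : (1 + z ^ 2) ≠ 0 := by positivity
  have : Y z = (1 + z ^ 2) * (Y z / (1 + z ^ 2)) := by field_simp
  simp only [Y] at this ⊢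
  linear_combination this

lemma swirl_zero (b b1 b2 m : ℝ → ℝ) (hb : ∀ z, HasDerivAt b (b1 z) z)
    (hb1 : ∀ z, HasDerivAt b1 (b2 z) z) (hm : Continuous m)
    (eq : ∀ z, (1 + z ^ 2) * b2 z + 3 * z * b1 z = m z * b1 z)
    (ht : Tendsto b atTop (𝓝 0)) (hbt : Tendsto b atBot (𝓝 0)) (z : ℝ) : b z = 0 := by
  let g : ℝ → ℝ := fun z => (3 * z - m z) / (1 + z ^ 2)
  have hg : Continuous g := by
    apply Continuous.div (by fun_prop) (by fun_prop)
    intro x; positivity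
  let M : ℝ → ℝ := fun x => ∫ t in (0:ℝ)..x, g t
  have hM : ∀ x, HasDerivAt M (g x) x := fun x =>
    intervalIntegral.integral_hasDerivAt_right (hg.intervalIntegrable _ _)
      (hg.stronglyMeasurableAtFilter _ _) hg.continuousAt
  have hK : ∀ x, HasDerivAt (fun x => b1 x * Real.exp (M x)) 0 x := by
    intro x
    refine ((hb1 x).mul (hM x).exp).congr_deriv ?_
    have h := eq x
    have hp : (1 + x ^ 2) ≠ 0 := by positivity
    simp only [g]
    field_simp
    linear_combination h * Real.exp (M x)
  have hK0 := const_of_hd hK (fun _ => rfl)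
  have hdiff : Differentiable ℝ b := fun x => (hb x).differentiableAt
  have hsign : ∀ x, b1 x = (b1 0 * Real.exp (M 0)) * Real.exp (-(M x)) := by
    intro x
    rw [← hK0 x 0, mul_assoc, ← Real.exp_add]; simp
  rcases le_total 0 (b1 0 * Real.exp (M 0)) with h | h
  · have hmono : Monotone b := monotone_of_deriv_nonneg hdiff (fun x => by
      rw [(hb x).deriv, hsign]; positivity)
    exact le_antisymm (hmono.ge_of_tendsto ht z) (hmono.le_of_tendsto hbt z)
  · have hanti : Antitone b := antitone_of_deriv_nonpos hdiff (fun x => by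
      rw [(hb x).deriv, hsign]; exact mul_nonpos_of_nonpos_of_nonneg h (Real.exp_pos _).le)
    exact le_antisymm (hanti.ge_of_tendsto hbt z) (hanti.le_of_tendsto ht z)

lemma le_sig (z : ℝ) : z ≤ √(1 + z ^ 2) := Real.le_sqrt_of_sq_le (by linarith)

lemma sig_atTop : Tendsto (fun z : ℝ => √(1 + z ^ 2)) atTop atTop :=
  tendsto_atTop_mono le_sig tendsto_id

lemma bdd_of_deriv (h h1 : ℝ → ℝ) (K Z : ℝ) (hZ : 0 < Z) (hh : ∀ z, HasDerivAt h (h1 z) z)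
    (hb : ∀ z, Z ≤ z → |h1 z| ≤ K / z ^ 2) (z : ℝ) (hz : Z ≤ z) : |h z| ≤ |h Z| + K / Z := by
  have hK : 0 ≤ K := by
    have := (abs_nonneg _).trans (hb Z le_rfl)
    by_contra hc
    push Not at hc
    have := div_neg_of_neg_of_pos hc (pow_pos hZ 2)
    linarith
  have hinv : ∀ x, Z ≤ x → HasDerivAt (fun x : ℝ => K / x) (-(K / x ^ 2)) x := by
    intro x hx
    have hx0 : x ≠ 0 := (hZ.trans_le hx).ne'
    have := (hasDerivAt_inv hx0).const_mul K
    refine (this.congr_deriv ?_)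
    field_simp
  have key : ∀ s : ℝ, |s| = 1 → s * h z ≤ s * h Z + K / Z := by
    intro s hs
    have hanti : AntitoneOn (fun x => s * h x + K / x) (Set.Ici Z) := by
      have hd : ∀ x, Z ≤ x → HasDerivAt (fun x => s * h x + K / x) (s * h1 x + -(K / x ^ 2)) x :=
        fun x hx => ((hh x).const_mul s).add (hinv x hx)
      apply antitoneOn_of_deriv_nonpos (convex_Ici Z)
      · exact fun x hx => (hd x hx).continuousAt.continuousWithinAt
      · intro x hx
        rw [interior_Ici] at hx
        exact (hd x (le_of_lt hx)).differentiableAt.differentiableWithinAt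
      · intro x hx
        rw [interior_Ici] at hx
        rw [(hd x (le_of_lt hx)).deriv]
        have h1' := hb x (le_of_lt hx)
        have h2 : s * h1 x ≤ |h1 x| := by
          calc s * h1 x ≤ |s * h1 x| := le_abs_self _
            _ = |h1 x| := by rw [abs_mul, hs, one_mul]
        linarith
    have := hanti (Set.mem_Ici.2 le_rfl) (Set.mem_Ici.2 hz) hz
    have h3 : 0 ≤ K / z := div_nonneg hK (hZ.le.trans hz)
    simp only at this
    linarith
  have k1 := key 1 (by simp)
  have k2 := key (-1) (by simp)
  rw [abs_le]
  constructor <;> linarith [neg_abs_le (h Z), le_abs_self (h Z)]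

lemma riccati_lim (m m1 : ℝ → ℝ) (γ C : ℝ) (hm : ∀ z, HasDerivAt m (m1 z) z)
    (eq : ∀ z, (1 + z ^ 2) * m1 z + z * m z - m z ^ 2 / 2 = -γ)
    (h1 : ∀ᶠ z in atTop, |m z| ≤ C * Real.log √(1 + z ^ 2))
    (h2 : ∀ᶠ z in atTop, |γ + 2 * z * m z - m z ^ 2 / 2| ≤ C * Real.log √(1 + z ^ 2)) :
    Tendsto (fun z => √((γ + 2 * z * m z - m z ^ 2 / 2) ^ 2 + m z ^ 2) / Real.log √(1 + z ^ 2))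
      atTop (𝓝 (2 * |γ|)) := by
  have hLt : Tendsto (fun z : ℝ => Real.log √(1 + z ^ 2)) atTop atTop :=
    Real.tendsto_log_atTop.comp sig_atTop
  have hL2 : ∀ᶠ z : ℝ in atTop,
      4 * (|C| + 1) ^ 2 * Real.log √(1 + z ^ 2) ^ 2 ≤ √(1 + z ^ 2) := by
    have h := (Real.isLittleO_pow_log_id_atTop (n := 2)).def
      (c := (4 * (|C| + 1) ^ 2)⁻¹) (by positivity)
    have h' := sig_atTop.eventually h
    filter_upwards [h'] with z hz
    rw [Real.norm_of_nonneg (by positivity), id, Real.norm_of_nonneg (sig_pos z).le] at hz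
    rw [inv_mul_eq_div, le_div_iff₀ (by positivity)] at hz
    linarith
  have hmsmall : ∀ᶠ z in atTop, m z ^ 2 ≤ 1 / z := by
    filter_upwards [h1, h2, hL2, hLt.eventually_ge_atTop 1, hLt.eventually_ge_atTop |γ|,
      eventually_ge_atTop 1] with z e1 e2 e3 e4 e5 e6
    set L := Real.log √(1 + z ^ 2)
    have hs : √(1 + z ^ 2) ≤ 2 * z := by
      apply Real.sqrt_le_iff.2; constructor <;> nlinarith
    have hC : C ≤ |C| := le_abs_self C
    have hC0 := abs_nonneg C
    have hCL : C * L ≤ |C| * L := by gcongr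
    set D := |C| + 1 with hD
    have hDL : 1 ≤ D * L := by nlinarith
    have a1 : |m z| ≤ z / 2 := by nlinarith
    have a2 : |m z| * z ≤ D * L := by
      have b1 : |m z * (2 * z - m z / 2)| ≤ D * L := by
        have : m z * (2 * z - m z / 2) = (γ + 2 * z * m z - m z ^ 2 / 2) - γ := by ring
        rw [this]
        have g1 := abs_le.1 e2
        have g2 := abs_le.1 e5
        have g3 : D * L = |C| * L + L := by rw [hD]; ring
        exact abs_le.2 ⟨by linarith [g1.1, g2.2], by linarith [g1.2, g2.1]⟩
      rw [abs_mul] at b1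
      have b2 : z ≤ |2 * z - m z / 2| := by
        refine le_trans ?_ (le_abs_self _)
        linarith [le_abs_self (m z)]
      nlinarith [abs_nonneg (m z)]
    have a3 : (|m z| * z) ^ 2 ≤ z := by
      have : (|m z| * z) ^ 2 ≤ (D * L) ^ 2 := by gcongr
      nlinarith
    rw [mul_pow, sq_abs] at a3
    rw [le_div_iff₀ (by linarith)]
    nlinarith
  -- h
  let h : ℝ → ℝ := fun z => √(1 + z ^ 2) * m z + γ * Real.log √(1 + z ^ 2)
  have hh : ∀ z, HasDerivAt h ((m z ^ 2 / 2 - γ) / √(1 + z ^ 2) + γ * z / (1 + z ^ 2)) z := by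
    intro z
    have hs := sig_pos z
    have hs2 := sig_sq z
    refine (((hd_sig z).mul (hm z)).add
      (((hd_sig z).log hs.ne').const_mul γ)).congr_deriv ?_
    have e := eq z
    set s := √(1 + z ^ 2)
    rw [← hs2] at e ⊢
    field_simp
    linear_combination 2 * s * e
  obtain ⟨Z, hZ⟩ := (hmsmall.and (eventually_ge_atTop 1)).exists_forall_of_atTop
  have hZ1 : 1 ≤ Z := (hZ Z le_rfl).2
  have hhb := bdd_of_deriv h _ (1 + |γ|) Z (by linarith) hh (by
    intro z hz
    obtain ⟨c1, c2⟩ := hZ z hz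
    have hs := sig_pos z
    have hs2 := sig_sq z
    have hls := le_sig z
    have hz0 : 0 < z := by linarith
    have : (m z ^ 2 / 2 - γ) / √(1 + z ^ 2) + γ * z / (1 + z ^ 2)
      = m z ^ 2 / 2 / √(1 + z ^ 2) + γ * ((z - √(1 + z ^ 2)) / (1 + z ^ 2)) := by
      rw [← hs2]
      set s := √(1 + z ^ 2)
      rw [show √(s ^ 2) = s from by rw [hs2]]
      field_simp
      ring
    rw [this]
    have d1 : |m z ^ 2 / 2 / √(1 + z ^ 2)| ≤ 1 / z ^ 2 := by
      rw [abs_of_nonneg (by positivity), div_le_div_iff₀ hs (by positivity)]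
      rw [le_div_iff₀ hz0] at c1
      nlinarith
    have d2 : |(z - √(1 + z ^ 2)) / (1 + z ^ 2)| ≤ 1 / z ^ 2 := by
      rw [abs_div, abs_of_nonpos (by linarith), abs_of_pos (by positivity : 0 < 1 + z ^ 2)]
      have : √(1 + z ^ 2) ≤ z + 1 := by
        apply Real.sqrt_le_iff.2; constructor <;> nlinarith
      apply div_le_div₀ <;> nlinarith
    calc _ ≤ _ := abs_add_le _ _
      _ ≤ 1 / z ^ 2 + |γ| * (1 / z ^ 2) := by rw [abs_mul]; gcongr
      _ = _ := by ring)
  have hLinv : Tendsto (fun z : ℝ => (Real.log √(1 + z ^ 2))⁻¹) atTop (𝓝 0) :=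
    tendsto_inv_atTop_zero.comp hLt
  have hhL : Tendsto (fun z => (Real.log √(1 + z ^ 2))⁻¹ * h z) atTop (𝓝 0) := by
    refine (bdd_le_mul_tendsto_zero' (f := h) (|h Z| + (1 + |γ|) / Z) ?_ hLinv).congr ?_
    rotate_left
    · intro z; ring
    · filter_upwards [eventually_ge_atTop Z] with z hz using hhb z hz
  have hsm : Tendsto (fun z => √(1 + z ^ 2) * m z / Real.log √(1 + z ^ 2)) atTop (𝓝 (-γ)) := by
    have := hhL.sub_const γ
    rw [zero_sub] at this
    refine this.congr' ?_
    filter_upwards [hLt.eventually_gt_atTop 0] with z hz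
    simp only [h]
    field_simp
    ring
  have hsinv : Tendsto (fun z : ℝ => (√(1 + z ^ 2))⁻¹) atTop (𝓝 0) :=
    tendsto_inv_atTop_zero.comp sig_atTop
  have hmL : Tendsto (fun z => m z / Real.log √(1 + z ^ 2)) atTop (𝓝 0) := by
    have := hsinv.mul hsm
    rw [zero_mul] at this
    refine this.congr fun z => ?_
    have := sig_pos z
    field_simp
  have hzs : Tendsto (fun z : ℝ => z / √(1 + z ^ 2)) atTop (𝓝 1) := by
    have : Tendsto (fun z : ℝ => √(1 - ((√(1 + z ^ 2))⁻¹) ^ 2)) atTop (𝓝 (√(1 - 0 ^ 2))) :=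
      ((hsinv.pow 2).const_sub 1).sqrt
    norm_num at this
    refine this.congr' ?_
    filter_upwards [eventually_ge_atTop 0] with z hz
    have hs := sig_pos z
    rw [← Real.sqrt_sq (div_nonneg hz hs.le)]
    congr 1
    rw [div_pow, sig_sq]
    field_simp
    ring
  have hm2 : Tendsto (fun z => m z ^ 2) atTop (𝓝 0) := by
    refine tendsto_of_tendsto_of_tendsto_of_le_of_le' tendsto_const_nhds
      (tendsto_inv_atTop_zero) (Eventually.of_forall fun z => sq_nonneg (m z)) ?_
    filter_upwards [hmsmall] with z hz
    rwa [one_div] at hz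
  have hfL : Tendsto (fun z => (γ + 2 * z * m z - m z ^ 2 / 2) / Real.log √(1 + z ^ 2)) atTop
      (𝓝 (γ * 0 + 2 * (1 * -γ) - 0 / 2 * 0)) := by
    refine (((hLinv.const_mul γ).add ((hzs.mul hsm).const_mul 2)).sub
      ((hm2.div_const 2).mul hLinv)).congr fun z => ?_
    have := sig_pos z
    field_simp
  have hfin := ((hfL.pow 2).add (hmL.pow 2)).sqrt
  have e : √((γ * 0 + 2 * (1 * -γ) - 0 / 2 * 0) ^ 2 + 0 ^ 2) = 2 * |γ| := by
    rw [show (γ * 0 + 2 * (1 * -γ) - 0 / 2 * 0) ^ 2 + 0 ^ 2 = (2 * γ) ^ 2 by ring, Real.sqrt_sq_eq_abs,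
      abs_mul]
    simp
  rw [e] at hfin
  refine hfin.congr' ?_
  filter_upwards [hLt.eventually_gt_atTop 0] with z hz
  rw [div_pow, div_pow, ← add_div, Real.sqrt_div (by positivity), Real.sqrt_sq hz.le]

lemma sinv_lim : Tendsto (fun z : ℝ => (√(1 + z ^ 2))⁻¹) atTop (𝓝 0) :=
  tendsto_inv_atTop_zero.comp sig_atTop

lemma zs_lim : Tendsto (fun z : ℝ => z / √(1 + z ^ 2)) atTop (𝓝 1) := by
  have : Tendsto (fun z : ℝ => √(1 - ((√(1 + z ^ 2))⁻¹) ^ 2)) atTop (𝓝 (√(1 - 0 ^ 2))) :=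
    ((sinv_lim.pow 2).const_sub 1).sqrt
  norm_num at this
  refine this.congr' ?_
  filter_upwards [eventually_ge_atTop 0] with z hz
  have hs := sig_pos z
  rw [← Real.sqrt_sq (div_nonneg hz hs.le)]
  congr 1
  rw [div_pow, sig_sq]
  field_simp
  ring

lemma logs_lim : Tendsto (fun z : ℝ => Real.log √(1 + z ^ 2) / √(1 + z ^ 2)) atTop (𝓝 0) := by
  have h := (Real.isLittleO_log_id_atTop).tendsto_div_nhds_zero
  exact h.comp sig_atTop

lemma ode_main (a a1 a2 b b1 b2 c c1 c2 q q1 : ℝ → ℝ) (C : ℝ)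
    (ha : ∀ z, HasDerivAt a (a1 z) z) (ha1 : ∀ z, HasDerivAt a1 (a2 z) z)
    (hb : ∀ z, HasDerivAt b (b1 z) z) (hb1 : ∀ z, HasDerivAt b1 (b2 z) z)
    (hc : ∀ z, HasDerivAt c (c1 z) z) (hc1 : ∀ z, HasDerivAt c1 (c2 z) z)
    (hq : ∀ z, HasDerivAt q (q1 z) z)
    (eq0 : ∀ z, -((2 * a z + 4 * z * a1 z + z ^ 2 * a2 z) + (-z * a1 z - 2 * a z) + a2 z)
      + (a z * (-a z - z * a1 z) + b z * (- b z) + c z * a1 z) + (-2 * q z - z * q1 z) = 0)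
    (eq1 : ∀ z, -((2 * b z + 4 * z * b1 z + z ^ 2 * b2 z) + (-z * b1 z - 2 * b z) + b2 z)
      + (a z * (-b z - z * b1 z) + b z * a z + c z * b1 z) = 0)
    (eq2 : ∀ z, -((2 * c z + 4 * z * c1 z + z ^ 2 * c2 z) + (-z * c1 z - c z) + c2 z)
      + (a z * (-c z - z * c1 z) + c z * c1 z) + q1 z = 0)
    (div : ∀ z, -z * a1 z + c1 z = 0)
    (hbd : ∀ s : ℝ, s = 1 ∨ s = -1 → ∀ᶠ z in atTop,
      √(1 + z ^ 2) * √(a (s * z) ^ 2 + b (s * z) ^ 2 + c (s * z) ^ 2) ≤ C * Real.log √(1 + z ^ 2)) :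
    (∀ z, b z = 0) ∧ ∃ L : ℝ, L ≤ 0 ∧ ∀ s : ℝ, s = 1 ∨ s = -1 → Tendsto (fun z =>
      √(1 + z ^ 2) * √(a (s * z) ^ 2 + b (s * z) ^ 2 + c (s * z) ^ 2) / (-Real.log √(1 + z ^ 2)))
      atTop (𝓝 L) := by
  have hbs : ∀ s : ℝ, s = 1 ∨ s = -1 → Tendsto (fun z => b (s * z)) atTop (𝓝 0) := by
    intro s hs
    have h0 := logs_lim.const_mul C
    rw [mul_zero] at h0
    refine squeeze_zero_norm' ?_ h0
    filter_upwards [hbd s hs] with z hz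
    have hp := sig_pos z
    rw [← mul_div_assoc, le_div_iff₀ hp]
    refine le_trans ?_ hz
    rw [mul_comm]
    gcongr
    rw [Real.norm_eq_abs]
    apply Real.abs_le_sqrt
    nlinarith [sq_nonneg (a (s * z)), sq_nonneg (c (s * z))]
  have hac : Continuous a := continuous_iff_continuousAt.2 fun z => (ha z).continuousAt
  have hcc : Continuous c := continuous_iff_continuousAt.2 fun z => (hc z).continuousAt
  have hb0 : ∀ z, b z = 0 := by
    refine swirl_zero b b1 b2 (fun z => c z - z * a z) hb hb1 (by fun_prop) ?_ ?_ ?_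
    · intro z; linear_combination -(eq1 z)
    · simpa using hbs 1 (Or.inl rfl)
    · have := (hbs (-1) (Or.inr rfl)).comp tendsto_neg_atBot_atTop
      refine this.congr fun z => ?_
      simp
  refine ⟨hb0, ?_⟩
  obtain ⟨k, l, d, hY⟩ := ode_int a a1 a2 c c1 c2 q q1 ha ha1 hc hc1 hq
    (fun z => by have := eq0 z; rw [hb0] at this; linarith) eq2 div
  have hfm : ∀ z, (a z + z * c z) ^ 2 + (c z - z * a z) ^ 2 = (1 + z ^ 2) * (a z ^ 2 + c z ^ 2) :=
    fun z => by ring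
  have hnorm : ∀ s : ℝ, s = 1 ∨ s = -1 → ∀ z, √(1 + z ^ 2) *
      √(a (s * z) ^ 2 + b (s * z) ^ 2 + c (s * z) ^ 2) =
      √((a (s * z) + s * z * c (s * z)) ^ 2 + (c (s * z) - s * z * a (s * z)) ^ 2) := by
    intro s hs z
    rw [hfm, hb0, ← Real.sqrt_mul (by positivity)]
    have : s ^ 2 = 1 := by rcases hs with h | h <;> rw [h] <;> norm_num
    congr 1
    rw [mul_pow, this]; ring
  have hF : ∀ s : ℝ, s = 1 ∨ s = -1 → ∀ᶠ z in atTop,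
      |a (s * z) + s * z * c (s * z)| ≤ C * Real.log √(1 + z ^ 2) := by
    intro s hs
    filter_upwards [hbd s hs] with z hz
    rw [hnorm s hs] at hz
    exact (Real.abs_le_sqrt (by nlinarith [sq_nonneg (c (s * z) - s * z * a (s * z))])).trans hz
  have hM : ∀ s : ℝ, s = 1 ∨ s = -1 → ∀ᶠ z in atTop,
      |c (s * z) - s * z * a (s * z)| ≤ C * Real.log √(1 + z ^ 2) := by
    intro s hs
    filter_upwards [hbd s hs] with z hz
    rw [hnorm s hs] at hz
    exact (Real.abs_le_sqrt (by nlinarith [sq_nonneg (a (s * z) + s * z * c (s * z))])).trans hz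
  have hkl : ∀ s : ℝ, s = 1 ∨ s = -1 → k + s * l + d = 0 := by
    intro s hs
    have hs2 : s ^ 2 = 1 := by rcases hs with h | h <;> rw [h] <;> norm_num
    have t1 : Tendsto (fun z => (a (s * z) + s * z * c (s * z)) * (√(1 + z ^ 2))⁻¹) atTop (𝓝 0) := by
      have h0 := logs_lim.const_mul C
      rw [mul_zero] at h0
      refine squeeze_zero_norm' ?_ h0
      filter_upwards [hF s hs] with z hz
      rw [norm_mul, Real.norm_eq_abs, Real.norm_of_nonneg (inv_nonneg.2 (sig_pos z).le),
        ← mul_div_assoc, div_eq_mul_inv]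
      gcongr
    have t2 : Tendsto (fun z => (c (s * z) - s * z * a (s * z)) * (√(1 + z ^ 2))⁻¹) atTop (𝓝 0) := by
      have h0 := logs_lim.const_mul C
      rw [mul_zero] at h0
      refine squeeze_zero_norm' ?_ h0
      filter_upwards [hM s hs] with z hz
      rw [norm_mul, Real.norm_eq_abs, Real.norm_of_nonneg (inv_nonneg.2 (sig_pos z).le),
        ← mul_div_assoc, div_eq_mul_inv]
      gcongr
    have t3 := ((t1.mul sinv_lim).sub ((zs_lim.mul t2).const_mul (2 * s))).add
      ((t2.pow 2).div_const 2)
    have t4 := ((zs_lim.pow 2).const_mul k).add (zs_lim.const_mul (s * l))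
    have t5 := t4.add_const d
    have := tendsto_nhds_unique (t3.congr (fun z => ?_)) t5
    · norm_num at this
      linarith
    · have h := hY (s * z)
      rw [mul_pow, hs2, one_mul] at h
      have hp := sig_pos z
      have hp2 := sig_sq z
      have h' : k * (z / √(1 + z ^ 2)) ^ 2 + s * l * (z / √(1 + z ^ 2)) + d
        = (a (s * z) + s * z * c (s * z) - 2 * (s * z) * (c (s * z) - s * z * a (s * z)) +
          (c (s * z) - s * z * a (s * z)) ^ 2 / 2) / √(1 + z ^ 2) ^ 2 := by
        rw [h, hp2]
        rw [eq_div_iff (by positivity)]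
        rw [mul_div_assoc s z]
        rw [mul_pow, hs2]
        ring
      rw [h']
      field_simp
  have hl1 := hkl 1 (Or.inl rfl)
  have hl2 := hkl (-1) (Or.inr rfl)
  have hl : l = 0 := by linarith
  have hd : d = -k := by linarith
  have hg : ∀ z, (a z + z * c z) - 2 * z * (c z - z * a z) + (c z - z * a z) ^ 2 / 2 = -k := by
    intro z
    have h := hY z
    rw [hl, hd, div_pow, sig_sq] at h
    rw [h]
    have : (1 + z ^ 2) ≠ 0 := by positivity
    field_simp
    ring
  have hm : ∀ z, HasDerivAt (fun z => c z - z * a z) (-a z) z := fun z => by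
    refine ((hc z).sub ((hasDerivAt_id' z).mul (ha z))).congr_deriv ?_
    linear_combination div z
  refine ⟨-(2 * |(-k)|), by have := abs_nonneg (-k); linarith, ?_⟩
  intro s hs
  have hs2 : s ^ 2 = 1 := by rcases hs with h | h <;> rw [h] <;> norm_num
  have hfeq : ∀ z, -k + 2 * z * (s * (c (s * z) - s * z * a (s * z)))
      - (s * (c (s * z) - s * z * a (s * z))) ^ 2 / 2 = a (s * z) + s * z * c (s * z) := by
    intro z
    rw [← hg (s * z), mul_pow, hs2]; ring
  have := riccati_lim (fun z => s * (c (s * z) - s * z * a (s * z))) (fun z => -a (s * z)) (-k) C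
    (by
      intro z
      have h1 := (hm (s * z)).comp z ((hasDerivAt_id' z).const_mul s)
      refine (h1.const_mul s).congr_deriv ?_
      linear_combination (-a (s * z)) * hs2)
    (by
      intro z
      have h := hg (s * z)
      rw [mul_pow, hs2]
      linear_combination -h + z ^ 2 * a (s * z) * hs2)
    (by
      filter_upwards [hM s hs] with z hz
      rw [abs_mul]
      rcases hs with h | h <;> rw [h] at hz ⊢ <;> simpa using hz)
    (by
      filter_upwards [hF s hs] with z hz
      rwa [hfeq])
  refine this.neg.congr fun z => ?_
  rw [hfeq, hnorm s hs, mul_pow, hs2, one_mul, div_neg]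
def pt (x y z : ℝ) : V3 := !₂[x, y, z]

@[simp] lemma pt_0 (x y z : ℝ) : pt x y z 0 = x := rfl
@[simp] lemma pt_1 (x y z : ℝ) : pt x y z 1 = y := rfl
@[simp] lemma pt_2 (x y z : ℝ) : pt x y z 2 = z := rfl

lemma ext3 {x y : V3} (h0 : x 0 = y 0) (h1 : x 1 = y 1) (h2 : x 2 = y 2) : x = y := by
  ext i; fin_cases i
  · exact h0
  · exact h1
  · exact h2

lemma norm3 (x : V3) : ‖x‖ = √(x 0 ^ 2 + x 1 ^ 2 + x 2 ^ 2) := by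
  rw [EuclideanSpace.norm_eq, Fin.sum_univ_three]; simp

lemma norm3_sq (x : V3) : ‖x‖ ^ 2 = x 0 ^ 2 + x 1 ^ 2 + x 2 ^ 2 := by
  rw [norm3, Real.sq_sqrt (by positivity)]

lemma e3_apply (i j : Fin 3) : e3 i j = if j = i then 1 else 0 := by
  simp [e3]

lemma S3_eq : S3 = pt 0 0 (-1) := by
  apply ext3 <;> simp [S3]
lemma N3_eq : N3 = pt 0 0 1 := by
  apply ext3 <;> simp [N3]

abbrev Om : Set V3 := cone3 (sphere2 \ {S3, N3})

lemma mem_sph (x : V3) (h : x ∈ sphere2) : x 0 ^ 2 + x 1 ^ 2 + x 2 ^ 2 = 1 := by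
  rw [← norm3_sq]
  have : ‖x‖ = 1 := by simpa [sphere2] using h
  rw [this]; norm_num

lemma mem_Om (x : V3) : x ∈ Om ↔ 0 < x 0 ^ 2 + x 1 ^ 2 := by
  constructor
  · rintro ⟨h0, h1, h2⟩
    by_contra hc
    have e0 : x 0 = 0 := by nlinarith [sq_nonneg (x 0), sq_nonneg (x 1)]
    have e1 : x 1 = 0 := by nlinarith [sq_nonneg (x 0), sq_nonneg (x 1)]
    have := mem_sph _ h1
    have y0 : (‖x‖⁻¹ • x) 0 = 0 := by simp [e0]
    have y1 : (‖x‖⁻¹ • x) 1 = 0 := by simp [e1]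
    rw [y0, y1] at this
    have h3 : ((‖x‖⁻¹ • x) 2 - 1) * ((‖x‖⁻¹ • x) 2 + 1) = 0 := by linear_combination this
    apply h2
    rcases mul_eq_zero.1 h3 with h | h
    · right
      rw [Set.mem_singleton_iff, N3_eq]
      exact ext3 y0 y1 (by rw [pt_2]; linarith)
    · left
      rw [S3_eq]
      exact ext3 y0 y1 (by rw [pt_2]; linarith)
  · intro h
    have hx : x ≠ 0 := by rintro rfl; simp at h
    have hn : ‖x‖ ≠ 0 := norm_ne_zero_iff.2 hx
    refine ⟨hx, ?_, ?_⟩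
    · simp [sphere2, norm_smul, hn]
    · intro hc
      have : (‖x‖⁻¹ • x) 0 = 0 ∧ (‖x‖⁻¹ • x) 1 = 0 := by
        rcases hc with hc | hc
        · rw [hc, S3_eq]; simp
        · rw [hc, N3_eq]; simp
      simp [hn] at this
      rw [this.1, this.2] at h; simp at h

lemma isOpen_Om : IsOpen Om := by
  have : Om = {x : V3 | 0 < x 0 ^ 2 + x 1 ^ 2} := by ext x; exact mem_Om x
  rw [this]
  exact isOpen_lt continuous_const (by fun_prop)

lemma hd_line {f : V3 → ℝ} {x : V3} {j : Fin 3} {s : ℝ} (h : DifferentiableAt ℝ f (x + s • e3 j)) :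
    HasDerivAt (fun s : ℝ => f (x + s • e3 j)) (pd j f (x + s • e3 j)) s := by
  have h1 : HasDerivAt (fun s : ℝ => x + s • e3 j) (e3 j) s := by
    simpa using ((hasDerivAt_id s).smul_const (e3 j)).const_add x
  exact h.hasFDerivAt.comp_hasDerivAt s h1

lemma pd_first {f : V3 → ℝ} {x : V3} {j : Fin 3} (h : DifferentiableAt ℝ f x) {G : ℝ → ℝ} {G' : ℝ}
    (hG : (fun s : ℝ => f (x + s • e3 j)) =ᶠ[𝓝 0] G) (hG' : HasDerivAt G G' 0) : pd j f x = G' := by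
  have h1 : HasDerivAt (fun s : ℝ => f (x + s • e3 j)) (pd j f (x + (0:ℝ) • e3 j)) 0 :=
    hd_line (by simpa using h)
  have h2 := h1.unique (hG'.congr_of_eventuallyEq hG)
  simpa using h2

lemma cd_pd {f : V3 → ℝ} {x : V3} {j : Fin 3} (h : ContDiffAt ℝ 2 f x) :
    DifferentiableAt ℝ (fun y => pd j f y) x := by
  have h1 : ContDiffAt ℝ 1 (fderiv ℝ f) x := h.fderiv_right (by norm_num)
  exact (h1.clm_apply contDiffAt_const).differentiableAt (by norm_num)

lemma cd_ev {f : V3 → ℝ} {x : V3} (h : ContDiffAt ℝ 2 f x) :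
    ∀ᶠ y in 𝓝 x, DifferentiableAt ℝ f y := by
  filter_upwards [h.eventually (by simp)] with y hy using hy.differentiableAt (by norm_num)

lemma line_tendsto (x : V3) (j : Fin 3) : Tendsto (fun s : ℝ => x + s • e3 j) (𝓝 0) (𝓝 x) := by
  have : Continuous (fun s : ℝ => x + s • e3 j) := by fun_prop
  simpa using this.tendsto 0

lemma pd_second {f : V3 → ℝ} {x : V3} {j : Fin 3} (h : ContDiffAt ℝ 2 f x) {G G' : ℝ → ℝ} {G'' : ℝ}
    (hG : ∀ᶠ s in 𝓝 0, f (x + s • e3 j) = G s)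
    (hG' : ∀ᶠ s in 𝓝 0, HasDerivAt G (G' s) s) (hG'' : HasDerivAt G' G'' 0) :
    pd j f x = G' 0 ∧ pd j (fun y => pd j f y) x = G'' := by
  refine ⟨pd_first (h.differentiableAt (by norm_num)) hG hG'.self_of_nhds, ?_⟩
  refine pd_first (cd_pd h) ?_ hG''
  filter_upwards [hG.eventually_nhds, hG', (line_tendsto x j).eventually (cd_ev h)] with s h1 h2 h3
  exact (hd_line h3).unique (h2.congr_of_eventuallyEq h1)

lemma pd_congr {f g : V3 → ℝ} {x : V3} {j : Fin 3} (h : f =ᶠ[𝓝 x] g) : pd j f x = pd j g x := by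
  rw [pd, pd, h.fderiv_eq]

lemma lap_congr {f g : V3 → ℝ} {x : V3} (h : f =ᶠ[𝓝 x] g) : lap3 f x = lap3 g x := by
  unfold lap3
  refine Finset.sum_congr rfl fun j _ => pd_congr ?_
  filter_upwards [h.eventually_nhds] with y hy using pd_congr hy

lemma pd_lin {f g : V3 → ℝ} {x : V3} {j : Fin 3} (c s : ℝ) (hf : DifferentiableAt ℝ f x)
    (hg : DifferentiableAt ℝ g x) :
    pd j (fun z => c * f z + s * g z) x = c * pd j f x + s * pd j g x := by
  have := ((hf.hasFDerivAt.const_mul c).add (hg.hasFDerivAt.const_mul s)).fderiv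
  unfold pd
  rw [show (fun z => c * f z + s * g z) = ((fun y => c * f y) + fun y => s * g y) from rfl, this]
  simp

lemma lap_lin {f g : V3 → ℝ} {x : V3} (c s : ℝ) (hf : ContDiffAt ℝ 2 f x)
    (hg : ContDiffAt ℝ 2 g x) :
    lap3 (fun z => c * f z + s * g z) x = c * lap3 f x + s * lap3 g x := by
  unfold lap3
  rw [Finset.mul_sum, Finset.mul_sum, ← Finset.sum_add_distrib]
  refine Finset.sum_congr rfl fun j _ => ?_
  rw [← pd_lin c s (cd_pd hf) (cd_pd hg)]
  apply pd_congr
  filter_upwards [cd_ev hf, cd_ev hg] with y h1 h2 using pd_lin c s h1 h2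

def rot (c s : ℝ) : V3 →L[ℝ] V3 := LinearMap.toContinuousLinearMap
  { toFun := fun x => pt (c * x 0 - s * x 1) (s * x 0 + c * x 1) (x 2)
    map_add' := fun x y => by apply ext3 <;> simp <;> ring
    map_smul' := fun t x => by apply ext3 <;> simp <;> ring }

@[simp] lemma rot_0 (c s : ℝ) (x : V3) : rot c s x 0 = c * x 0 - s * x 1 := rfl
@[simp] lemma rot_1 (c s : ℝ) (x : V3) : rot c s x 1 = s * x 0 + c * x 1 := rfl
@[simp] lemma rot_2 (c s : ℝ) (x : V3) : rot c s x 2 = x 2 := rfl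

lemma rot_e0 (c s : ℝ) : rot c s (e3 0) = c • e3 0 + s • e3 1 := by
  apply ext3 <;> simp [e3_apply]
lemma rot_e1 (c s : ℝ) : rot c s (e3 1) = (-s) • e3 0 + c • e3 1 := by
  apply ext3 <;> simp [e3_apply]
lemma rot_e2 (c s : ℝ) : rot c s (e3 2) = e3 2 := by
  apply ext3 <;> simp [e3_apply]

lemma pd_rot {f : V3 → ℝ} {x : V3} {c s : ℝ} (h : DifferentiableAt ℝ f (rot c s x)) :
    pd 0 (fun z => f (rot c s z)) x = c * pd 0 f (rot c s x) + s * pd 1 f (rot c s x) ∧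
    pd 1 (fun z => f (rot c s z)) x = (-s) * pd 0 f (rot c s x) + c * pd 1 f (rot c s x) ∧
    pd 2 (fun z => f (rot c s z)) x = pd 2 f (rot c s x) := by
  have : fderiv ℝ (fun z => f (rot c s z)) x = (fderiv ℝ f (rot c s x)).comp (rot c s) :=
    (h.hasFDerivAt.comp x (rot c s).hasFDerivAt).fderiv
  unfold pd
  rw [this]
  simp only [ContinuousLinearMap.comp_apply, rot_e0, rot_e1, rot_e2, map_add, map_smul, smul_eq_mul]
  simp

lemma lap_rot {f : V3 → ℝ} {x : V3} {c s : ℝ} (hcs : c ^ 2 + s ^ 2 = 1)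
    (h : ContDiffAt ℝ 2 f (rot c s x)) :
    lap3 (fun z => f (rot c s z)) x = lap3 f (rot c s x) := by
  have hev : ∀ᶠ y in 𝓝 x, DifferentiableAt ℝ f (rot c s y) :=
    (rot c s).continuous.continuousAt.eventually (cd_ev h)
  have hd : ∀ j, DifferentiableAt ℝ (fun z => pd j f (rot c s z)) x := fun j =>
    DifferentiableAt.comp (f := fun z => rot c s z) (g := fun z => pd j f z) x (cd_pd h)
      (rot c s).differentiableAt
  unfold lap3
  rw [Fin.sum_univ_three, Fin.sum_univ_three]
  have e0 : pd 0 (fun y => pd 0 (fun z => f (rot c s z)) y) x =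
      pd 0 (fun y => c * pd 0 f (rot c s y) + s * pd 1 f (rot c s y)) x := by
    apply pd_congr
    filter_upwards [hev] with y hy using (pd_rot hy).1
  have e1 : pd 1 (fun y => pd 1 (fun z => f (rot c s z)) y) x =
      pd 1 (fun y => (-s) * pd 0 f (rot c s y) + c * pd 1 f (rot c s y)) x := by
    apply pd_congr
    filter_upwards [hev] with y hy using (pd_rot hy).2.1
  have e2 : pd 2 (fun y => pd 2 (fun z => f (rot c s z)) y) x =
      pd 2 (fun y => pd 2 f (rot c s y)) x := by
    apply pd_congr
    filter_upwards [hev] with y hy using (pd_rot hy).2.2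
  have r := fun j => pd_rot (cd_pd (j := j) h)
  rw [e0, e1, e2, pd_lin _ _ (hd 0) (hd 1), pd_lin _ _ (hd 0) (hd 1), (r 2).2.2, (r 0).1, (r 1).1,
    (r 0).2.1, (r 1).2.1]
  linear_combination (pd 0 (fun y => pd 0 f y) (rot c s x) + pd 1 (fun y => pd 1 f y) (rot c s x)) * hcs

lemma rot_mem {c s : ℝ} (hcs : c ^ 2 + s ^ 2 = 1) {x : V3} (hx : x ∈ Om) : rot c s x ∈ Om := by
  rw [mem_Om] at hx ⊢
  simp only [rot_0, rot_1]
  have : (c * x 0 - s * x 1) ^ 2 + (s * x 0 + c * x 1) ^ 2 = x 0 ^ 2 + x 1 ^ 2 := by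
    linear_combination (x 0 ^ 2 + x 1 ^ 2) * hcs
  rwa [this]

lemma NS_rot {u : V3 → V3} {p : V3 → ℝ} (hu : ∀ x ∈ Om, ∀ i, ContDiffAt ℝ 2 (fun z => u z i) x)
    (hp : ∀ x ∈ Om, DifferentiableAt ℝ p x)
    {c s : ℝ} (hcs : c ^ 2 + s ^ 2 = 1) (hrot : ∀ x ∈ Om, u (rot c s x) = rot c s (u x))
    {x : V3} (hx : x ∈ Om) (hNS : NSEq u p (rot c s x)) :
    NSEq u (fun z => p (rot c s z)) x := by
  have hrx := rot_mem hcs hx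
  have hnb : ∀ᶠ y in 𝓝 x, y ∈ Om := isOpen_Om.mem_nhds hx
  have hr0 : ∀ y ∈ Om, u y 0 = c * u (rot c s y) 0 + s * u (rot c s y) 1 := by
    intro y hy; rw [hrot y hy]; simp; linear_combination -(u y 0) * hcs
  have hr1 : ∀ y ∈ Om, u y 1 = (-s) * u (rot c s y) 0 + c * u (rot c s y) 1 := by
    intro y hy; rw [hrot y hy]; simp; linear_combination -(u y 1) * hcs
  have hr2 : ∀ y ∈ Om, u y 2 = u (rot c s y) 2 := by
    intro y hy; rw [hrot y hy]; simp
  have q0 : (fun z => u z 0) =ᶠ[𝓝 x] fun z => c * u (rot c s z) 0 + s * u (rot c s z) 1 := by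
    filter_upwards [hnb] with y hy using hr0 y hy
  have q1 : (fun z => u z 1) =ᶠ[𝓝 x] fun z => (-s) * u (rot c s z) 0 + c * u (rot c s z) 1 := by
    filter_upwards [hnb] with y hy using hr1 y hy
  have q2 : (fun z => u z 2) =ᶠ[𝓝 x] fun z => u (rot c s z) 2 := by
    filter_upwards [hnb] with y hy using hr2 y hy
  have cd : ∀ i, ContDiffAt ℝ 2 (fun z => u (rot c s z) i) x := fun i =>
    ContDiffAt.comp (g := fun z => u z i) (f := fun z => rot c s z) x (hu _ hrx i)
      (rot c s).contDiff.contDiffAt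
  have dd : ∀ i, DifferentiableAt ℝ (fun z => u (rot c s z) i) x := fun i =>
    (cd i).differentiableAt (by norm_num)
  have l := fun i => lap_rot hcs (hu _ hrx i)
  have d := fun i => pd_rot ((hu _ hrx i).differentiableAt (by norm_num))
  have dp := pd_rot (hp _ hrx)
  obtain ⟨hmom, hdiv⟩ := hNS
  have m0 := hmom 0
  have m1 := hmom 1
  have m2 := hmom 2
  rw [Fin.sum_univ_three] at m0 m1 m2 hdiv
  have L0 : lap3 (fun z => u z 0) x = c * lap3 (fun z => u z 0) (rot c s x)
    + s * lap3 (fun z => u z 1) (rot c s x) := by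
    rw [lap_congr q0, lap_lin _ _ (cd 0) (cd 1), l 0, l 1]
  have L1 : lap3 (fun z => u z 1) x = (-s) * lap3 (fun z => u z 0) (rot c s x)
    + c * lap3 (fun z => u z 1) (rot c s x) := by
    rw [lap_congr q1, lap_lin _ _ (cd 0) (cd 1), l 0, l 1]
  have L2 : lap3 (fun z => u z 2) x = lap3 (fun z => u z 2) (rot c s x) := by
    rw [lap_congr q2, l 2]
  have D0 : ∀ j, pd j (fun z => u z 0) x = c * pd j (fun z => u (rot c s z) 0) x
    + s * pd j (fun z => u (rot c s z) 1) x := fun j => by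
    rw [pd_congr q0, pd_lin _ _ (dd 0) (dd 1)]
  have D1 : ∀ j, pd j (fun z => u z 1) x = (-s) * pd j (fun z => u (rot c s z) 0) x
    + c * pd j (fun z => u (rot c s z) 1) x := fun j => by
    rw [pd_congr q1, pd_lin _ _ (dd 0) (dd 1)]
  have D2 : ∀ j, pd j (fun z => u z 2) x = pd j (fun z => u (rot c s z) 2) x := fun j => by
    rw [pd_congr q2]
  have hc : c ^ 2 = 1 - s ^ 2 := by linarith
  constructor
  · intro i
    rw [Fin.sum_univ_three]
    fin_cases i
    · show -lap3 (fun z => u z 0) x + (u x 0 * pd 0 (fun z => u z 0) x + u x 1 * pd 1 (fun z => u z 0) x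
        + u x 2 * pd 2 (fun z => u z 0) x) + pd 0 (fun z => p (rot c s z)) x = 0
      rw [L0, D0, D0, D0, hr0 x hx, hr1 x hx, hr2 x hx, (d 0).1, (d 0).2.1, (d 0).2.2,
        (d 1).1, (d 1).2.1, (d 1).2.2, dp.1]
      generalize rot c s x = y at *
      linear_combination c * m0 + s * m1 + ((u y 0 * pd 0 (fun z => u z 0) y
        + u y 1 * pd 1 (fun z => u z 0) y) * c + (u y 0 * pd 0 (fun z => u z 1) y
        + u y 1 * pd 1 (fun z => u z 1) y) * s) * hcs
    · show -lap3 (fun z => u z 1) x + (u x 0 * pd 0 (fun z => u z 1) x + u x 1 * pd 1 (fun z => u z 1) x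
        + u x 2 * pd 2 (fun z => u z 1) x) + pd 1 (fun z => p (rot c s z)) x = 0
      rw [L1, D1, D1, D1, hr0 x hx, hr1 x hx, hr2 x hx, (d 0).1, (d 0).2.1, (d 0).2.2,
        (d 1).1, (d 1).2.1, (d 1).2.2, dp.2.1]
      generalize rot c s x = y at *
      linear_combination (-s) * m0 + c * m1 + ((u y 0 * pd 0 (fun z => u z 0) y
        + u y 1 * pd 1 (fun z => u z 0) y) * (-s) + (u y 0 * pd 0 (fun z => u z 1) y
        + u y 1 * pd 1 (fun z => u z 1) y) * c) * hcs
    · show -lap3 (fun z => u z 2) x + (u x 0 * pd 0 (fun z => u z 2) x + u x 1 * pd 1 (fun z => u z 2) x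
        + u x 2 * pd 2 (fun z => u z 2) x) + pd 2 (fun z => p (rot c s z)) x = 0
      rw [L2, D2, D2, D2, hr0 x hx, hr1 x hx, hr2 x hx, (d 2).1, (d 2).2.1, (d 2).2.2, dp.2.2]
      generalize rot c s x = y at *
      linear_combination m2 + (u y 0 * pd 0 (fun z => u z 2) y
        + u y 1 * pd 1 (fun z => u z 2) y) * hcs
  · rw [Fin.sum_univ_three, D0, D1, D2, (d 0).1, (d 1).1, (d 0).2.1, (d 1).2.1, (d 2).2.2]
    linear_combination hdiv + (pd 0 (fun z => u z 0) (rot c s x) + pd 1 (fun z => u z 1) (rot c s x)) * hcs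

lemma rho_pos {x : V3} (hx : x ∈ Om) : 0 < rho x := Real.sqrt_pos.2 ((mem_Om x).1 hx)
lemma rho_sq (x : V3) : rho x ^ 2 = x 0 ^ 2 + x 1 ^ 2 := Real.sq_sqrt (by positivity)

lemma axi_rot {u : V3 → V3} (h : AxisymOn u Om) {c s : ℝ} (hcs : c ^ 2 + s ^ 2 = 1) {x : V3}
    (hx : x ∈ Om) : u (rot c s x) = rot c s (u x) := by
  have hy := rot_mem hcs hx
  have e01 : (rot c s x) 0 ^ 2 + (rot c s x) 1 ^ 2 = x 0 ^ 2 + x 1 ^ 2 := by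
    simp only [rot_0, rot_1]
    linear_combination (x 0 ^ 2 + x 1 ^ 2) * hcs
  have hn : ‖rot c s x‖ = ‖x‖ := by
    rw [norm3, norm3, e01, rot_2]
  have hr : rho (rot c s x) = rho x := by
    unfold rho; rw [e01]
  have hn0 : ‖x‖ ≠ 0 := norm_ne_zero_iff.2 hx.1
  have hr0 := rho_pos hx
  have hr2 := rho_sq x
  obtain ⟨h1, h2, h3⟩ := h _ hy _ hx hn (rot_2 c s x)
  unfold uRc at h1
  unfold uTc at h2
  unfold uPc at h3
  rw [hn] at h1 h2
  rw [hr] at h2 h3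
  rw [rot_2] at h1 h2
  field_simp at h1 h2 h3
  set W := u (rot c s x)
  set U := u x
  set y := rot c s x with hyd
  have hB : (W 2 - U 2) * (x 2 ^ 2 + rho x ^ 2) = 0 := by
    linear_combination x 2 * h1 - h2
  have hB' : W 2 = U 2 := by
    rcases mul_eq_zero.1 hB with h | h
    · linarith
    · nlinarith [sq_nonneg (x 2), pow_pos hr0 2]
  have hA : W 0 * y 0 + W 1 * y 1 = U 0 * x 0 + U 1 * x 1 := by
    rw [hB'] at h1; linarith
  have hp : x 0 ^ 2 + x 1 ^ 2 ≠ 0 := by rw [← hr2]; positivity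
  have y0 : y 0 = c * x 0 - s * x 1 := rfl
  have y1 : y 1 = s * x 0 + c * x 1 := rfl
  rw [y0, y1] at hA h3 e01
  apply ext3
  · apply mul_left_cancel₀ hp
    rw [rot_0]
    linear_combination (c * x 0 - s * x 1) * hA - (s * x 0 + c * x 1) * h3 - W 0 * e01
  · apply mul_left_cancel₀ hp
    rw [rot_1]
    linear_combination (s * x 0 + c * x 1) * hA + (c * x 0 - s * x 1) * h3 - W 1 * e01
  · rw [rot_2, hB']

lemma pt_mem {x y z : ℝ} (h : 0 < x ^ 2 + y ^ 2) : pt x y z ∈ Om := (mem_Om _).2 h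

lemma u_gen {u : V3 → V3} (h : AxisymOn u Om)
    (hu_hom : ∀ x ∈ Om, ∀ lam : ℝ, 0 < lam → u (lam • x) = lam⁻¹ • u x) {x : V3} (hx : x ∈ Om) :
    u x = (rho x)⁻¹ • rot (x 0 / rho x) (x 1 / rho x) (u (pt 1 0 (x 2 / rho x))) := by
  have hr0 := rho_pos hx
  have hr2 := rho_sq x
  have hcs : (x 0 / rho x) ^ 2 + (x 1 / rho x) ^ 2 = 1 := by
    field_simp; linarith
  have hm : pt 1 0 (x 2 / rho x) ∈ Om := pt_mem (by norm_num)
  rw [← axi_rot h hcs hm, ← hu_hom _ (rot_mem hcs hm) _ hr0]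
  congr 1
  apply ext3 <;> simp <;> field_simp

lemma hd_sK {K : ℝ → ℝ} (hK : ContinuousAt K 0) : HasDerivAt (fun s => s * K s) (K 0) 0 := by
  rw [hasDerivAt_iff_tendsto_slope]
  refine (hK.tendsto.mono_left nhdsWithin_le_nhds).congr' ?_
  filter_upwards [self_mem_nhdsWithin] with s hs
  have : s ≠ 0 := hs
  simp [slope_def_field, this]

lemma hd_w (ζ s : ℝ) : HasDerivAt (fun s : ℝ => ζ / √(1 + s ^ 2)) (-(ζ * s) / √(1 + s ^ 2) ^ 3) s := by
  have hs := sig_pos s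
  refine ((hasDerivAt_const s ζ).div (hd_sig s) hs.ne').congr_deriv ?_
  field_simp
  ring

lemma hd_A {H H1 : ℝ → ℝ} (hH : ∀ z, HasDerivAt H (H1 z) z) (ζ s : ℝ) :
    HasDerivAt (fun s : ℝ => H (ζ / √(1 + s ^ 2)) / √(1 + s ^ 2) ^ 2)
      (s * (-ζ * H1 (ζ / √(1 + s ^ 2)) / √(1 + s ^ 2) ^ 5
        - 2 * H (ζ / √(1 + s ^ 2)) / √(1 + s ^ 2) ^ 4)) s := by
  have hs := sig_pos s
  refine (((hH _).comp s (hd_w ζ s)).div ((hd_sig s).pow 2) (pow_ne_zero 2 hs.ne')).congr_deriv ?_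
  simp only [Function.comp]
  simp
  field_simp

lemma hd_C {H H1 : ℝ → ℝ} (hH : ∀ z, HasDerivAt H (H1 z) z) (ζ s : ℝ) :
    HasDerivAt (fun s : ℝ => H (ζ / √(1 + s ^ 2)) / √(1 + s ^ 2))
      (s * (-ζ * H1 (ζ / √(1 + s ^ 2)) / √(1 + s ^ 2) ^ 4
        - H (ζ / √(1 + s ^ 2)) / √(1 + s ^ 2) ^ 3)) s := by
  have hs := sig_pos s
  refine (((hH _).comp s (hd_w ζ s)).div (hd_sig s) (by positivity)).congr_deriv ?_
  simp only [Function.comp]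
  field_simp

lemma cont_K {H H1 : ℝ → ℝ} (hH : Continuous H) (hH1 : Continuous H1) (ζ e : ℝ) (n m : ℕ) :
    Continuous (fun s : ℝ => -ζ * H1 (ζ / √(1 + s ^ 2)) / √(1 + s ^ 2) ^ n
        - e * H (ζ / √(1 + s ^ 2)) / √(1 + s ^ 2) ^ m) := by
  have h1 : Continuous (fun s : ℝ => √(1 + s ^ 2)) := by fun_prop
  have hne : ∀ s : ℝ, √(1 + s ^ 2) ≠ 0 := fun s => (sig_pos s).ne'
  have h2 : Continuous (fun s : ℝ => ζ / √(1 + s ^ 2)) := continuous_const.div h1 hne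
  exact ((continuous_const.mul (hH1.comp h2)).div (h1.pow n) (fun s => pow_ne_zero _ (hne s))).sub
    ((continuous_const.mul (hH.comp h2)).div (h1.pow m) (fun s => pow_ne_zero _ (hne s)))

/-- radial line -/
lemma hd_L0 {H H1 : ℝ → ℝ} (hH : ∀ z, HasDerivAt H (H1 z) z) (ζ s : ℝ) (hs : 0 < 1 + s) :
    HasDerivAt (fun s : ℝ => H (ζ / (1 + s)) / (1 + s))
      (-ζ * H1 (ζ / (1 + s)) / (1 + s) ^ 3 - H (ζ / (1 + s)) / (1 + s) ^ 2) s := by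
  have h1 : HasDerivAt (fun s : ℝ => 1 + s) 1 s := by simpa using (hasDerivAt_id s).const_add 1
  have hw := (hasDerivAt_const s ζ).div h1 hs.ne'
  refine (((hH _).comp s hw).div h1 hs.ne').congr_deriv ?_
  simp only [Function.comp, Pi.div_apply]
  field_simp
  ring

lemma hd_L0' {H H1 H2 : ℝ → ℝ} (hH : ∀ z, HasDerivAt H (H1 z) z) (hH1 : ∀ z, HasDerivAt H1 (H2 z) z)
    (ζ : ℝ) : HasDerivAt (fun s : ℝ => -ζ * H1 (ζ / (1 + s)) / (1 + s) ^ 3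
      - H (ζ / (1 + s)) / (1 + s) ^ 2) (2 * H ζ + 4 * ζ * H1 ζ + ζ ^ 2 * H2 ζ) 0 := by
  have h1 : HasDerivAt (fun s : ℝ => 1 + s) 1 0 := by simpa using (hasDerivAt_id (0:ℝ)).const_add 1
  have hw := (hasDerivAt_const (0:ℝ) ζ).div h1 (by norm_num)
  have g1 := ((((hH1 _).comp 0 hw).const_mul (-ζ)).div (h1.pow 3) (by norm_num)).sub
    (((hH _).comp 0 hw).div (h1.pow 2) (by norm_num))
  refine g1.congr_deriv ?_
  simp
  ring

lemma hd_L0p {H H1 : ℝ → ℝ} (hH : ∀ z, HasDerivAt H (H1 z) z) (ζ : ℝ) :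
    HasDerivAt (fun s : ℝ => H (ζ / (1 + s)) / (1 + s) ^ 2) (-2 * H ζ - ζ * H1 ζ) 0 := by
  have h1 : HasDerivAt (fun s : ℝ => 1 + s) 1 0 := by simpa using (hasDerivAt_id (0:ℝ)).const_add 1
  have hw := (hasDerivAt_const (0:ℝ) ζ).div h1 (by norm_num)
  refine (((hH _).comp 0 hw).div (h1.pow 2) (by norm_num)).congr_deriv ?_
  simp
  ring

lemma c2_hd {f : ℝ → ℝ} (h : ContDiff ℝ 2 f) : (∀ z, HasDerivAt f (deriv f z) z) ∧
    (∀ z, HasDerivAt (deriv f) (deriv (deriv f) z) z) :=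
  ⟨fun z => (h.differentiable (by norm_num) z).hasDerivAt,
    fun z => (h.differentiable_deriv_two z).hasDerivAt⟩

lemma pt_line (z : ℝ) : pt 1 0 z = pt 1 0 0 + z • e3 2 := by
  apply ext3 <;> simp [e3_apply]

lemma pX0 (ζ s : ℝ) : pt 1 0 ζ + s • e3 0 = pt (1 + s) 0 ζ := by
  apply ext3 <;> simp [e3_apply]
lemma pX1 (ζ s : ℝ) : pt 1 0 ζ + s • e3 1 = pt 1 s ζ := by
  apply ext3 <;> simp [e3_apply]
lemma pX2 (ζ s : ℝ) : pt 1 0 ζ + s • e3 2 = pt 1 0 (ζ + s) := by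
  apply ext3 <;> simp [e3_apply]

lemma X_mem (ζ : ℝ) : pt 1 0 ζ ∈ Om := pt_mem (by norm_num)

lemma contDiff_v {f : V3 → ℝ} {n : WithTop ℕ∞} (h : ∀ x ∈ Om, ContDiffAt ℝ n f x) :
    ContDiff ℝ n (fun z => f (pt 1 0 z)) := by
  rw [contDiff_iff_contDiffAt]
  intro z
  have h2 : ContDiff ℝ n (fun z : ℝ => pt 1 0 z) := by
    have : (fun z : ℝ => pt 1 0 z) = fun z : ℝ => pt 1 0 0 + z • e3 2 := by
      funext z; exact pt_line z
    rw [this]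
    fun_prop
  exact (h _ (X_mem z)).comp z h2.contDiffAt

lemma ev_pos : ∀ᶠ s : ℝ in 𝓝 0, 0 < 1 + s := by
  have : Tendsto (fun s : ℝ => 1 + s) (𝓝 0) (𝓝 (1 + 0)) := tendsto_id.const_add 1
  exact this.eventually (lt_mem_nhds (by norm_num))

lemma scal_pt (ζ s : ℝ) (hs : 0 < 1 + s) : pt (1 + s) 0 ζ = (1 + s) • pt 1 0 (ζ / (1 + s)) := by
  apply ext3 <;> simp
  field_simp

/-- derivatives along the radial line -/
lemma line0 {f : V3 → ℝ} (hf : ∀ x ∈ Om, ContDiffAt ℝ 2 f x)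
    (hom : ∀ x ∈ Om, ∀ lam : ℝ, 0 < lam → f (lam • x) = lam⁻¹ * f x)
    {H H1 H2 : ℝ → ℝ} (hH0 : ∀ z, f (pt 1 0 z) = H z)
    (hH : ∀ z, HasDerivAt H (H1 z) z) (hH1 : ∀ z, HasDerivAt H1 (H2 z) z) (ζ : ℝ) :
    pd 0 f (pt 1 0 ζ) = -H ζ - ζ * H1 ζ ∧
    pd 0 (fun y => pd 0 f y) (pt 1 0 ζ) = 2 * H ζ + 4 * ζ * H1 ζ + ζ ^ 2 * H2 ζ := by
  have := pd_second (hf _ (X_mem ζ)) (j := 0) (G := fun s : ℝ => H (ζ / (1 + s)) / (1 + s))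
    (by
      filter_upwards [ev_pos] with s hs
      rw [pX0, scal_pt ζ s hs, hom _ (X_mem _) _ hs, hH0]; exact (div_eq_inv_mul _ _).symm)
    (by filter_upwards [ev_pos] with s hs using hd_L0 hH ζ s hs)
    (hd_L0' hH hH1 ζ)
  refine ⟨this.1.trans ?_, this.2⟩
  simp; ring

lemma line2 {f : V3 → ℝ} (hf : ∀ x ∈ Om, ContDiffAt ℝ 2 f x)
    {H H1 H2 : ℝ → ℝ} (hH0 : ∀ z, f (pt 1 0 z) = H z)
    (hH : ∀ z, HasDerivAt H (H1 z) z) (hH1 : ∀ z, HasDerivAt H1 (H2 z) z) (ζ : ℝ) :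
    pd 2 f (pt 1 0 ζ) = H1 ζ ∧ pd 2 (fun y => pd 2 f y) (pt 1 0 ζ) = H2 ζ := by
  have h := pd_second (hf _ (X_mem ζ)) (j := 2) (G := fun s : ℝ => H (ζ + s))
    (G' := fun s : ℝ => H1 (ζ + s)) (G'' := H2 (ζ + 0))
    (Eventually.of_forall fun s => by rw [pX2, hH0])
    (Eventually.of_forall fun s => (hH (ζ + s)).comp_const_add ζ s)
    ((hH1 (ζ + 0)).comp_const_add ζ 0)
  simpa using h

lemma rho_pt1 (s z : ℝ) : rho (pt 1 s z) = √(1 + s ^ 2) := by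
  unfold rho; simp

theorem main_red (u : V3 → V3) (p : V3 → ℝ)
    (hu_hom : ∀ x ∈ Om, ∀ lam : ℝ, 0 < lam → u (lam • x) = lam⁻¹ • u x)
    (hp_hom : ∀ x ∈ Om, ∀ lam : ℝ, 0 < lam → p (lam • x) = (lam ^ 2)⁻¹ * p x)
    (hu_reg : ContDiffOn ℝ 2 u Om) (hp_reg : ContDiffOn ℝ 1 p Om)
    (haxi : AxisymOn u Om) (hNS : ∀ x ∈ Om, NSEq u p x) (C : ℝ)
    (hbd : ∀ s : ℝ, s = 1 ∨ s = -1 → ∀ᶠ z in atTop,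
      √(1 + z ^ 2) * ‖u (pt 1 0 (s * z))‖ ≤ C * Real.log √(1 + z ^ 2)) :
    (∀ z, u (pt 1 0 z) 1 = 0) ∧ ∃ L : ℝ, L ≤ 0 ∧ ∀ s : ℝ, s = 1 ∨ s = -1 → Tendsto (fun z =>
      √(1 + z ^ 2) * ‖u (pt 1 0 (s * z))‖ / (-Real.log √(1 + z ^ 2))) atTop (𝓝 L) := by
  have hu : ∀ i, ∀ x ∈ Om, ContDiffAt ℝ 2 (fun z => u z i) x := fun i x hx =>
    contDiffAt_euclidean.1 (hu_reg.contDiffAt (isOpen_Om.mem_nhds hx)) i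
  have hp : ∀ x ∈ Om, ContDiffAt ℝ 1 p x := fun x hx => hp_reg.contDiffAt (isOpen_Om.mem_nhds hx)
  have hpd : ∀ x ∈ Om, DifferentiableAt ℝ p x := fun x hx => (hp x hx).differentiableAt (by norm_num)
  have hom : ∀ i, ∀ x ∈ Om, ∀ lam : ℝ, 0 < lam → u (lam • x) i = lam⁻¹ * u x i := by
    intro i x hx lam hl; rw [hu_hom x hx lam hl]; simp
  let v : Fin 3 → ℝ → ℝ := fun i z => u (pt 1 0 z) i
  let v1 : Fin 3 → ℝ → ℝ := fun i => deriv (v i)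
  let v2 : Fin 3 → ℝ → ℝ := fun i => deriv (v1 i)
  have hv : ∀ i z, HasDerivAt (v i) (v1 i z) z := fun i => (c2_hd (contDiff_v (hu i))).1
  have hv1 : ∀ i z, HasDerivAt (v1 i) (v2 i z) z := fun i => (c2_hd (contDiff_v (hu i))).2
  have cv : ∀ i, Continuous (v i) := fun i =>
    continuous_iff_continuousAt.2 fun z => (hv i z).continuousAt
  have cv1 : ∀ i, Continuous (v1 i) := fun i =>
    continuous_iff_continuousAt.2 fun z => (hv1 i z).continuousAt
  let q : ℝ → ℝ := fun z => p (pt 1 0 z)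
  have hq : ∀ z, HasDerivAt q (deriv q z) z := fun z =>
    ((contDiff_v hp).differentiable (by norm_num) z).hasDerivAt
  have l0 := fun i => line0 (hu i) (hom i) (H := v i) (fun _ => rfl) (hv i) (hv1 i)
  have l2 := fun i => line2 (hu i) (H := v i) (fun _ => rfl) (hv i) (hv1 i)
  -- the tangential line
  have ug : ∀ ζ s, u (pt 1 s ζ) = (√(1 + s ^ 2))⁻¹ • rot (1 / √(1 + s ^ 2)) (s / √(1 + s ^ 2))
      (u (pt 1 0 (ζ / √(1 + s ^ 2)))) := by
    intro ζ s
    have := u_gen haxi hu_hom (x := pt 1 s ζ) (pt_mem (by positivity))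
    rwa [rho_pt1] at this
  have t0 : ∀ ζ, pd 1 (fun z => u z 0) (pt 1 0 ζ) = -v 1 ζ ∧
      pd 1 (fun y => pd 1 (fun z => u z 0) y) (pt 1 0 ζ) = -ζ * v1 0 ζ - 2 * v 0 ζ := by
    intro ζ
    have k0 := cont_K (cv 0) (cv1 0) ζ 2 5 4
    have k1 := cont_K (cv 1) (cv1 1) ζ 2 5 4
    have := pd_second (hu 0 _ (X_mem ζ)) (j := 1)
      (G := fun s : ℝ => v 0 (ζ / √(1 + s ^ 2)) / √(1 + s ^ 2) ^ 2
        - s * (v 1 (ζ / √(1 + s ^ 2)) / √(1 + s ^ 2) ^ 2))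
      (Eventually.of_forall fun s => by
        have := sig_pos s
        rw [pX1, ug]
        simp [v]
        field_simp)
      (Eventually.of_forall fun s =>
        (hd_A (hv 0) ζ s).sub ((hasDerivAt_id' s).mul (hd_A (hv 1) ζ s)))
      ((hd_sK k0.continuousAt).sub (((hd_A (hv 1) ζ 0).const_mul 1).add
        (hd_sK (continuous_id.mul k1).continuousAt)))
    refine ⟨this.1.trans ?_, this.2.trans ?_⟩ <;> simp
  have t1 : ∀ ζ, pd 1 (fun z => u z 1) (pt 1 0 ζ) = v 0 ζ ∧
      pd 1 (fun y => pd 1 (fun z => u z 1) y) (pt 1 0 ζ) = -ζ * v1 1 ζ - 2 * v 1 ζ := by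
    intro ζ
    have k0 := cont_K (cv 0) (cv1 0) ζ 2 5 4
    have k1 := cont_K (cv 1) (cv1 1) ζ 2 5 4
    have := pd_second (hu 1 _ (X_mem ζ)) (j := 1)
      (G := fun s : ℝ => v 1 (ζ / √(1 + s ^ 2)) / √(1 + s ^ 2) ^ 2
        + s * (v 0 (ζ / √(1 + s ^ 2)) / √(1 + s ^ 2) ^ 2))
      (Eventually.of_forall fun s => by
        have := sig_pos s
        rw [pX1, ug]
        simp [v]
        field_simp
        try ring)
      (Eventually.of_forall fun s =>
        (hd_A (hv 1) ζ s).add ((hasDerivAt_id' s).mul (hd_A (hv 0) ζ s)))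
      ((hd_sK k1.continuousAt).add (((hd_A (hv 0) ζ 0).const_mul 1).add
        (hd_sK (continuous_id.mul k0).continuousAt)))
    refine ⟨this.1.trans ?_, this.2.trans ?_⟩ <;> simp
  have t2 : ∀ ζ, pd 1 (fun z => u z 2) (pt 1 0 ζ) = 0 ∧
      pd 1 (fun y => pd 1 (fun z => u z 2) y) (pt 1 0 ζ) = -ζ * v1 2 ζ - v 2 ζ := by
    intro ζ
    have k2 := cont_K (cv 2) (cv1 2) ζ 1 4 3
    simp only [one_mul] at k2
    have := pd_second (hu 2 _ (X_mem ζ)) (j := 1)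
      (G := fun s : ℝ => v 2 (ζ / √(1 + s ^ 2)) / √(1 + s ^ 2))
      (Eventually.of_forall fun s => by
        have := sig_pos s
        rw [pX1, ug]
        simp [v]
        field_simp)
      (Eventually.of_forall fun s => hd_C (hv 2) ζ s)
      (hd_sK k2.continuousAt)
    refine ⟨this.1.trans ?_, this.2.trans ?_⟩ <;> simp
  -- pressure
  have p0 : ∀ ζ, pd 0 p (pt 1 0 ζ) = -2 * q ζ - ζ * deriv q ζ := by
    intro ζ
    refine pd_first (hpd _ (X_mem ζ)) ?_ (hd_L0p hq ζ)
    filter_upwards [ev_pos] with s hs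
    rw [pX0, scal_pt ζ s hs, hp_hom _ (X_mem _) _ hs]; exact (div_eq_inv_mul _ _).symm
  have p2 : ∀ ζ, pd 2 p (pt 1 0 ζ) = deriv q ζ := by
    intro ζ
    refine pd_first (hpd _ (X_mem ζ)) (G := fun s : ℝ => q (ζ + s)) ?_ ?_
    · exact Eventually.of_forall fun s => by
        show p _ = p _
        rw [pX2]
    · have := (hq (ζ + 0)).comp_const_add ζ 0
      rwa [add_zero] at this
  have p1 : ∀ ζ, pd 1 p (pt 1 0 ζ) = 0 := by
    intro ζ
    have hcs : ∀ φ : ℝ, Real.cos φ ^ 2 + Real.sin φ ^ 2 = 1 := fun φ => by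
      rw [add_comm]; exact Real.sin_sq_add_cos_sq φ
    have hK : ∀ φ : ℝ, pd 1 (fun z => p (rot (Real.cos φ) (Real.sin φ) z)) (pt 1 0 ζ)
        = pd 1 p (pt 1 0 ζ) := by
      intro φ
      have h1 := NS_rot (fun x hx i => hu i x hx) hpd (hcs φ)
        (fun x hx => axi_rot haxi (hcs φ) hx) (X_mem ζ) (hNS _ (rot_mem (hcs φ) (X_mem ζ)))
      have h2 := hNS _ (X_mem ζ)
      linarith [h1.1 1, h2.1 1]
    have hP : ∀ φ : ℝ, HasDerivAt (fun φ => p (pt (Real.cos φ) (Real.sin φ) ζ))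
        (pd 1 p (pt 1 0 ζ)) φ := by
      intro φ
      have hrX : rot (Real.cos φ) (Real.sin φ) (pt 1 0 ζ) = pt (Real.cos φ) (Real.sin φ) ζ := by
        apply ext3 <;> simp
      have hmem := rot_mem (hcs φ) (X_mem ζ)
      have hr := (pd_rot (hpd _ hmem)).2.1
      rw [hK φ, hrX] at hr
      rw [hrX] at hmem
      have hcurve : HasDerivAt (fun φ => pt (Real.cos φ) (Real.sin φ) ζ)
          ((-Real.sin φ) • e3 0 + Real.cos φ • e3 1) φ := by
        have : (fun φ => pt (Real.cos φ) (Real.sin φ) ζ) = fun φ =>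
            Real.cos φ • e3 0 + Real.sin φ • e3 1 + ζ • e3 2 := by
          funext φ
          apply ext3 <;> simp [e3_apply]
        rw [this]
        exact (((Real.hasDerivAt_cos φ).smul_const (e3 0)).add
          ((Real.hasDerivAt_sin φ).smul_const (e3 1))).add_const _
      have := (hpd _ hmem).hasFDerivAt.comp_hasDerivAt φ hcurve
      refine this.congr_deriv ?_
      rw [hr, map_add, map_smul, map_smul]
      rfl
    obtain ⟨φ, _, hφ⟩ := exists_hasDerivAt_eq_zero (f := fun φ => p (pt (Real.cos φ) (Real.sin φ) ζ))
      (f' := fun _ => pd 1 p (pt 1 0 ζ)) (a := 0) (b := 2 * π) Real.two_pi_pos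
      (fun x _ => (hP x).continuousAt.continuousWithinAt) (by simp) (fun x _ => hP x)
    exact hφ
  have hn : ∀ z, ‖u (pt 1 0 z)‖ = √(v 0 z ^ 2 + v 1 z ^ 2 + v 2 z ^ 2) := fun z => norm3 _
  have key : ∀ ζ, NSEq u p (pt 1 0 ζ) := fun ζ => hNS _ (X_mem ζ)
  have res := ode_main (v 0) (v1 0) (v2 0) (v 1) (v1 1) (v2 1) (v 2) (v1 2) (v2 2) q (deriv q) C
    (hv 0) (hv1 0) (hv 1) (hv1 1) (hv 2) (hv1 2) hq
    (by
      intro ζ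
      have h := (key ζ).1 0
      unfold lap3 at h
      rw [Fin.sum_univ_three, Fin.sum_univ_three, (l0 0 ζ).1, (l0 0 ζ).2, (l2 0 ζ).1, (l2 0 ζ).2,
        (t0 ζ).1, (t0 ζ).2, p0] at h
      exact h)
    (by
      intro ζ
      have h := (key ζ).1 1
      unfold lap3 at h
      rw [Fin.sum_univ_three, Fin.sum_univ_three, (l0 1 ζ).1, (l0 1 ζ).2, (l2 1 ζ).1, (l2 1 ζ).2,
        (t1 ζ).1, (t1 ζ).2, p1, add_zero] at h
      exact h)
    (by
      intro ζ
      have h := (key ζ).1 2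
      unfold lap3 at h
      rw [Fin.sum_univ_three, Fin.sum_univ_three, (l0 2 ζ).1, (l0 2 ζ).2, (l2 2 ζ).1, (l2 2 ζ).2,
        (t2 ζ).1, (t2 ζ).2, p2] at h
      rw [mul_zero, add_zero] at h
      exact h)
    (by
      intro ζ
      have h := (key ζ).2
      rw [Fin.sum_univ_three, (l0 0 ζ).1, (t1 ζ).1, (l2 2 ζ).1] at h
      linarith)
    (by
      intro s hs
      filter_upwards [hbd s hs] with z hz
      rwa [hn] at hz)
  refine ⟨res.1, ?_⟩
  obtain ⟨L, hL, hL2⟩ := res.2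
  refine ⟨L, hL, fun s hs => ?_⟩
  refine (hL2 s hs).congr fun z => ?_
  rw [hn]

lemma norm_rot {c s : ℝ} (hcs : c ^ 2 + s ^ 2 = 1) (x : V3) : ‖rot c s x‖ = ‖x‖ := by
  rw [norm3, norm3]
  congr 1
  simp only [rot_0, rot_1, rot_2]
  linear_combination (x 0 ^ 2 + x 1 ^ 2) * hcs

lemma sph_mem_Om {x : V3} (hx : x ∈ sphere2 \ {S3, N3}) : x ∈ Om := by
  have h1 : ‖x‖ = 1 := by simpa [sphere2] using hx.1
  refine ⟨?_, ?_⟩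
  · rintro rfl; simp at h1
  · simpa [h1] using hx

def pole (s : ℝ) : V3 := pt 0 0 s

lemma sph_pole {s : ℝ} (hs : s = 1 ∨ s = -1) :
    Tendsto (fun z : ℝ => (√(1 + z ^ 2))⁻¹ • pt 1 0 (s * z)) atTop (𝓝[sphere2 \ {S3, N3}] (pole s)) := by
  have hs2 : s ^ 2 = 1 := by rcases hs with h | h <;> rw [h] <;> norm_num
  rw [tendsto_nhdsWithin_iff]
  constructor
  · have : (fun z : ℝ => (√(1 + z ^ 2))⁻¹ • pt 1 0 (s * z)) = fun z : ℝ =>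
        (√(1 + z ^ 2))⁻¹ • e3 0 + (s * (z / √(1 + z ^ 2))) • e3 2 := by
      funext z
      apply ext3 <;> simp [e3_apply]
      ring
    rw [this]
    have h := (sinv_lim.smul_const (e3 0)).add ((zs_lim.const_mul s).smul_const (e3 2))
    have e : (0:ℝ) • e3 0 + (s * 1) • e3 2 = pole s := by
      apply ext3 <;> simp [e3_apply, pole]
    rwa [e] at h
  · refine Eventually.of_forall fun z => ?_
    have hm : pt 1 0 (s * z) ∈ Om := X_mem _
    have hn : ‖pt 1 0 (s * z)‖ = √(1 + z ^ 2) := by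
      rw [norm3]; congr 1; simp [mul_pow, hs2]
    have := hm.2
    rwa [hn] at this

lemma pole_atTop {s : ℝ} (hs : s = 1 ∨ s = -1) :
    Tendsto (fun x : V3 => s * (x 2 / rho x)) (𝓝[sphere2 \ {S3, N3}] (pole s)) atTop := by
  have hs2 : s ^ 2 = 1 := by rcases hs with h | h <;> rw [h] <;> norm_num
  have hc : Continuous rho := by unfold rho; fun_prop
  have h1 : Tendsto rho (𝓝[sphere2 \ {S3, N3}] (pole s)) (𝓝[>] 0) := by
    rw [tendsto_nhdsWithin_iff]
    constructor
    · have := (hc.tendsto (pole s)).mono_left (nhdsWithin_le_nhds (s := sphere2 \ {S3, N3}))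
      have e : rho (pole s) = 0 := by simp [rho, pole]
      rwa [e] at this
    · filter_upwards [self_mem_nhdsWithin] with x hx using rho_pos (sph_mem_Om hx)
  have h2 : Tendsto (fun x : V3 => s * x 2) (𝓝[sphere2 \ {S3, N3}] (pole s)) (𝓝 1) := by
    have hc2 : Continuous (fun x : V3 => s * x 2) := by fun_prop
    have := (hc2.tendsto (pole s)).mono_left (nhdsWithin_le_nhds (s := sphere2 \ {S3, N3}))
    have e : s * (pole s) 2 = 1 := by simp [pole]; linarith
    rwa [e] at this
  have h3 := h2.pos_mul_atTop one_pos (tendsto_inv_nhdsGT_zero.comp h1)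
  refine h3.congr fun x => ?_
  simp only [Function.comp]
  rw [div_eq_mul_inv]; ring

/-- Type 2 axisymmetric solutions on `S² \ {S,N}` have no swirl and
logarithmic limits at both poles (Lemma 3.1, first part). -/
theorem type_two_no_swirl (u : V3 → V3) (p : V3 → ℝ)
    (hu_hom : ∀ x ∈ cone3 (sphere2 \ {S3, N3}), ∀ lam : ℝ, 0 < lam →
      u (lam • x) = lam⁻¹ • u x)
    (hp_hom : ∀ x ∈ cone3 (sphere2 \ {S3, N3}), ∀ lam : ℝ, 0 < lam →
      p (lam • x) = (lam ^ 2)⁻¹ * p x)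
    (hu_reg : ContDiffOn ℝ 2 u (cone3 (sphere2 \ {S3, N3})))
    (hp_reg : ContDiffOn ℝ 1 p (cone3 (sphere2 \ {S3, N3})))
    (haxi : AxisymOn u (cone3 (sphere2 \ {S3, N3})))
    (hNS : ∀ x ∈ cone3 (sphere2 \ {S3, N3}), NSEq u p x)
    (hbound : ∃ C : ℝ,
      (∀ᶠ x in 𝓝[sphere2 \ {S3, N3}] S3, ‖u x‖ ≤ C * |Real.log (rho x)|) ∧
      (∀ᶠ x in 𝓝[sphere2 \ {S3, N3}] N3, ‖u x‖ ≤ C * |Real.log (rho x)|)) :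
    (∀ x ∈ cone3 (sphere2 \ {S3, N3}), uPc u x = 0) ∧
    (∃ L : ℝ, L ≤ 0 ∧
      Tendsto (fun x => ‖u x‖ / Real.log (rho x)) (𝓝[sphere2 \ {S3, N3}] S3) (𝓝 L) ∧
      Tendsto (fun x => ‖u x‖ / Real.log (rho x)) (𝓝[sphere2 \ {S3, N3}] N3) (𝓝 L)) := by
  obtain ⟨C, hS, hN⟩ := hbound
  have hS3 : S3 = pole (-1) := S3_eq
  have hN3 : N3 = pole 1 := N3_eq
  have hb : ∀ s : ℝ, s = 1 ∨ s = -1 →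
      ∀ᶠ x in 𝓝[sphere2 \ {S3, N3}] (pole s), ‖u x‖ ≤ C * |Real.log (rho x)| := by
    intro s hs
    rcases hs with rfl | rfl
    · rwa [← hN3]
    · rwa [← hS3]
  have hlog : ∀ z : ℝ, 0 ≤ Real.log √(1 + z ^ 2) := fun z =>
    Real.log_nonneg (Real.one_le_sqrt.2 (by nlinarith [sq_nonneg z]))
  have hbd : ∀ s : ℝ, s = 1 ∨ s = -1 → ∀ᶠ z in atTop,
      √(1 + z ^ 2) * ‖u (pt 1 0 (s * z))‖ ≤ C * Real.log √(1 + z ^ 2) := by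
    intro s hs
    filter_upwards [(sph_pole hs).eventually (hb s hs)] with z hz
    have hp := sig_pos z
    rw [hu_hom _ (X_mem _) _ (inv_pos.2 hp), inv_inv, norm_smul, Real.norm_of_nonneg hp.le] at hz
    have hr : rho ((√(1 + z ^ 2))⁻¹ • pt 1 0 (s * z)) = (√(1 + z ^ 2))⁻¹ := by
      unfold rho
      simp
    rw [hr, Real.log_inv, abs_neg, abs_of_nonneg (hlog z)] at hz
    exact hz
  obtain ⟨hb0, L, hL, hlim⟩ := main_red u p hu_hom hp_hom hu_reg hp_reg haxi hNS C hbd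
  refine ⟨?_, L, hL, ?_⟩
  · intro x hx
    have hr := rho_pos hx
    have hm : pt (rho x) 0 (x 2) ∈ Om := pt_mem (by positivity)
    have hg := u_gen haxi hu_hom hx
    unfold uPc
    rw [hg]
    simp only [PiLp.smul_apply, rot_0, rot_1, smul_eq_mul, hb0]
    field_simp
    ring
  · have hfin : ∀ s : ℝ, s = 1 ∨ s = -1 → Tendsto (fun x => ‖u x‖ / Real.log (rho x))
        (𝓝[sphere2 \ {S3, N3}] (pole s)) (𝓝 L) := by
      intro s hs
      have hs2 : s ^ 2 = 1 := by rcases hs with h | h <;> rw [h] <;> norm_num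
      refine ((hlim s hs).comp (pole_atTop hs)).congr' ?_
      filter_upwards [self_mem_nhdsWithin] with x hx
      have hxO := sph_mem_Om hx
      have hr := rho_pos hxO
      have hr2 := rho_sq x
      have hsp := mem_sph x hx.1
      have hg := u_gen haxi hu_hom hxO
      have hcs : (x 0 / rho x) ^ 2 + (x 1 / rho x) ^ 2 = 1 := by
        field_simp; linarith
      have hsig : √(1 + (s * (x 2 / rho x)) ^ 2) = (rho x)⁻¹ := by
        rw [mul_pow, hs2, one_mul]
        have : 1 + (x 2 / rho x) ^ 2 = ((rho x)⁻¹) ^ 2 := by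
          field_simp; linarith
        rw [this, Real.sqrt_sq (inv_pos.2 hr).le]
      simp only [Function.comp]
      rw [hsig, Real.log_inv, neg_neg]
      rw [show s * (s * (x 2 / rho x)) = x 2 / rho x by rw [← mul_assoc, ← sq, hs2, one_mul]]
      conv_rhs => rw [hg]
      rw [norm_smul, norm_rot hcs, Real.norm_of_nonneg (inv_pos.2 hr).le]
    exact ⟨hS3 ▸ hfin (-1) (Or.inr rfl), hN3 ▸ hfin 1 (Or.inl rfl)⟩
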